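/- Assume the growth conditions (GC) and the compactness-continuity conditions (CC). Then there exists a unique lower semicontinuous function v* : X → ℝ with ‖v*‖_W < ∞ satisfying the optimality equation v*(x) = inf_{a∈A(x)} [C(x,a) + α ∫_X v*(y) Q(dy|x,a)] for all x ∈ X; that is, v* is the unique fixed point of the dynamic programming operator T in the class of lower semicontinuous functions of finite W-norm. -/

import Mathlib

open MeasureTheory ProbabilityTheory Filter Topology
open scoped ENNReal

/-- The weighted norm `‖u‖_W = sup_x |u x| / W x`, valued in `ℝ≥0∞`. -/
noncomputable def WNorm {X : Type*} (W u : X → ℝ) : ℝ≥0∞ :=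
  ⨆ x, ENNReal.ofReal (|u x| / W x)

/-- The dynamic programming (Bellman) operator
`Tu(x) = inf_{a ∈ A(x)} [C(x,a) + α ∫ u dQ(·|x,a)]`. -/
noncomputable def Tbell {X A : Type*} [MeasurableSpace X] [MeasurableSpace A]
    (Adm : X → Set A) (Q : Kernel (X × A) X) (C : X × A → ℝ) (α : ℝ)
    (u : X → ℝ) (x : X) : ℝ :=
  sInf ((fun a => C (x, a) + α * ∫ y, u y ∂(Q (x, a))) '' Adm x)

/-!
Dividing by the weight `W` identifies `‖u - v‖_W` with the uniform distance between `u / W` and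
`v / W`, so Banach's fixed point theorem is available in the complete space of uniform convergence.
The growth conditions make `T` a contraction of modulus `αβ`. It remains to see that lower
semicontinuity is preserved by uniform limits and by `T`. For the latter, a lower semicontinuous
function bounded below by `-N W` is `-N W` plus a limit from below of nonnegative bounded
continuous functions, so its integral against a weakly continuous kernel is lower semicontinuous,
and the infimum over a compact-valued upper semicontinuous multifunction preserves this.
-/

open scoped NNReal UniformConvergence BoundedContinuousFunction

section PaschHausdorff

variable {X : Type*} [PseudoMetricSpace X] {f : X → ℝ}

/-- The Pasch–Hausdorff envelope of `f`, its largest `k`-Lipschitz minorant. As `k → ∞` it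
recovers a lower semicontinuous `f` from below. It has its meaning only for `f` bounded below. -/
noncomputable def lipschitzEnvelope (f : X → ℝ) (k : ℝ≥0) (x : X) : ℝ :=
  ⨅ y, f y + k * dist x y

theorem bddBelow_range_add_mul_dist (hf : BddBelow (Set.range f)) (k : ℝ≥0) (x : X) :
    BddBelow (Set.range fun y => f y + k * dist x y) := by
  obtain ⟨b, hb⟩ := hf
  refine ⟨b, ?_⟩
  rintro _ ⟨y, rfl⟩
  exact le_add_of_le_of_nonneg (hb ⟨y, rfl⟩) (by positivity)

theorem lipschitzEnvelope_le (hf : BddBelow (Set.range f)) (k : ℝ≥0) (x : X) :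
    lipschitzEnvelope f k x ≤ f x :=
  (ciInf_le (bddBelow_range_add_mul_dist hf k x) x).trans_eq <| by
    rw [dist_self, mul_zero, add_zero]

theorem lipschitzEnvelope_nonneg (hf : ∀ x, 0 ≤ f x) (k : ℝ≥0) (x : X) :
    0 ≤ lipschitzEnvelope f k x :=
  Real.iInf_nonneg fun y => add_nonneg (hf y) (by positivity)

theorem lipschitzWith_lipschitzEnvelope (hf : BddBelow (Set.range f)) (k : ℝ≥0) :
    LipschitzWith k (lipschitzEnvelope f k) := by
  refine LipschitzWith.of_le_add_mul k fun x z => ?_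
  have : Nonempty X := ⟨x⟩
  rw [← sub_le_iff_le_add]
  refine le_ciInf fun y => sub_le_iff_le_add.2 ?_
  calc lipschitzEnvelope f k x ≤ f y + k * dist x y :=
        ciInf_le (bddBelow_range_add_mul_dist hf k x) y
    _ ≤ f y + k * (dist x z + dist z y) := by gcongr; exact dist_triangle x z y
    _ = f y + k * dist z y + k * dist x z := by ring

theorem tendsto_lipschitzEnvelope (hf : BddBelow (Set.range f)) (hlsc : LowerSemicontinuous f)
    (x : X) : Tendsto (fun k => lipschitzEnvelope f k x) atTop (𝓝 (f x)) := by
  have : Nonempty X := ⟨x⟩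
  refine tendsto_order.2 ⟨fun c hc => ?_, fun c hc =>
    Eventually.of_forall fun k => (lipschitzEnvelope_le hf k x).trans_lt hc⟩
  obtain ⟨c', hcc', hc'⟩ := exists_between hc
  obtain ⟨b, hb⟩ := hf
  obtain ⟨δ, hδ, hball⟩ := Metric.eventually_nhds_iff.1 (hlsc x c' hc')
  filter_upwards [eventually_ge_atTop ((c' - b) / δ).toNNReal] with k hk
  refine hcc'.trans_le (le_ciInf fun y => ?_)
  rcases lt_or_ge (dist y x) δ with hnear | hfar
  · exact (hball hnear).le.trans (le_add_of_nonneg_right (by positivity))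
  · have hkδ : c' - b ≤ k * δ := (div_le_iff₀ hδ).1 (Real.toNNReal_le_iff_le_coe.1 hk)
    calc c' ≤ b + k * δ := sub_le_iff_le_add'.1 hkδ
      _ ≤ f y + k * dist x y := by
        rw [dist_comm x y]
        gcongr
        exact hb ⟨y, rfl⟩

theorem exists_seq_boundedContinuous_tendsto (hlsc : LowerSemicontinuous f) (hf : ∀ x, 0 ≤ f x) :
    ∃ g : ℕ → X →ᵇ ℝ, (∀ n x, 0 ≤ g n x) ∧ (∀ n x, g n x ≤ f x) ∧
      ∀ x, Tendsto (fun n => g n x) atTop (𝓝 (f x)) := by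
  have hbdd : BddBelow (Set.range f) := ⟨0, Set.forall_mem_range.2 hf⟩
  let truncated (n : ℕ) (x : X) : ℝ := min n (lipschitzEnvelope f n x)
  have hcont (n : ℕ) : Continuous (truncated n) :=
    continuous_const.min (lipschitzWith_lipschitzEnvelope hbdd n).continuous
  have hnonneg (n : ℕ) (x : X) : 0 ≤ truncated n x :=
    le_min n.cast_nonneg (lipschitzEnvelope_nonneg hf n x)
  have hnorm (n : ℕ) (x : X) : ‖truncated n x‖ ≤ n :=
    (Real.norm_of_nonneg (hnonneg n x)).trans_le (min_le_left _ _)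
  refine ⟨fun n => .ofNormedAddCommGroup (truncated n) (hcont n) n (hnorm n), hnonneg,
    fun n x => (min_le_right _ _).trans (lipschitzEnvelope_le hbdd n x), fun x => ?_⟩
  refine ((tendsto_lipschitzEnvelope hbdd hlsc x).comp tendsto_natCast_atTop_atTop).congr' ?_
  filter_upwards [tendsto_natCast_atTop_atTop.eventually_ge_atTop (f x)] with n hn
  exact (min_eq_right ((lipschitzEnvelope_le hbdd n x).trans hn)).symm

end PaschHausdorff

section WeakContinuity

variable {X Y : Type*} [PseudoMetricSpace X] [MeasurableSpace X] [OpensMeasurableSpace X]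
  [TopologicalSpace Y] {μ : Y → Measure X} {K : Set Y}

theorem lowerSemicontinuousOn_integral_of_nonneg
    (hμ : ∀ g : X →ᵇ ℝ, ContinuousOn (fun p => ∫ y, g y ∂μ p) K)
    {f : X → ℝ} (hlsc : LowerSemicontinuous f) (hf : ∀ x, 0 ≤ f x)
    (hint : ∀ p ∈ K, Integrable f (μ p)) :
    LowerSemicontinuousOn (fun p => ∫ y, f y ∂μ p) K := by
  obtain ⟨g, hg0, hgf, hlim⟩ := exists_seq_boundedContinuous_tendsto hlsc hf
  have hnorm (n : ℕ) (x : X) : ‖g n x‖ ≤ f x := (Real.norm_of_nonneg (hg0 n x)).trans_le (hgf n x)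
  have hgmeas (n : ℕ) (p : Y) : AEStronglyMeasurable (g n) (μ p) :=
    (g n).continuous.measurable.aestronglyMeasurable
  have hgint (n : ℕ) {p : Y} (hp : p ∈ K) : Integrable (g n) (μ p) :=
    (hint p hp).mono' (hgmeas n p) (Eventually.of_forall (hnorm n))
  intro p hp c hc
  have hlim_integral : Tendsto (fun n => ∫ y, g n y ∂μ p) atTop (𝓝 (∫ y, f y ∂μ p)) :=
    tendsto_integral_of_dominated_convergence f (fun n => hgmeas n p) (hint p hp)
      (fun n => Eventually.of_forall (hnorm n)) (Eventually.of_forall hlim)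
  obtain ⟨n, hn⟩ := (hlim_integral.eventually_const_lt hc).exists
  filter_upwards [(hμ (g n) p hp).eventually_const_lt hn, self_mem_nhdsWithin] with q hq hqK
  exact hq.trans_le (integral_mono (hgint n hqK) (hint q hqK) (hgf n))

theorem lowerSemicontinuousOn_integral_of_le
    (hμ : ∀ g : X →ᵇ ℝ, ContinuousOn (fun p => ∫ y, g y ∂μ p) K)
    {w : X → ℝ} (hw : Continuous w) (hwint : ∀ p ∈ K, Integrable w (μ p))
    (hwcont : ContinuousOn (fun p => ∫ y, w y ∂μ p) K)
    {u : X → ℝ} (hlsc : LowerSemicontinuous u) (hwu : ∀ x, w x ≤ u x)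
    (hint : ∀ p ∈ K, Integrable u (μ p)) :
    LowerSemicontinuousOn (fun p => ∫ y, u y ∂μ p) K := by
  have hdiff : LowerSemicontinuousOn (fun p => ∫ y, (u y + -w y) ∂μ p) K :=
    lowerSemicontinuousOn_integral_of_nonneg hμ (hlsc.add hw.neg.lowerSemicontinuous)
      (fun x => by linarith [hwu x]) fun p hp => (hint p hp).add (hwint p hp).neg
  have hsplit : ∀ p ∈ K, ∫ y, (u y + -w y) ∂μ p + ∫ y, w y ∂μ p = ∫ y, u y ∂μ p := by
    intro p hp
    simp_rw [← sub_eq_add_neg]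
    rw [integral_sub (hint p hp) (hwint p hp), sub_add_cancel]
  intro p hp
  exact ((hdiff.add hwcont.lowerSemicontinuousOn) p hp).congr_of_eventuallyEq hp
    (eventually_nhdsWithin_of_forall fun q hq c => by simp only [hsplit q hq])

end WeakContinuity

section ParametricInfimum

theorem exists_mem_sInf_image_eq {A R : Type*} [TopologicalSpace A]
    [ConditionallyCompleteLinearOrder R] {s : Set A} (hne : s.Nonempty) (hs : IsCompact s)
    {f : A → R} (hf : LowerSemicontinuousOn f s) : ∃ a ∈ s, sInf (f '' s) = f a := by
  obtain ⟨a, ha, hmin⟩ := hf.exists_isMinOn hne hs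
  exact ⟨a, ha, IsLeast.csInf_eq ⟨Set.mem_image_of_mem f ha, Set.forall_mem_image.2 hmin⟩⟩

theorem lowerSemicontinuous_sInf_image {X A R : Type*} [TopologicalSpace X] [TopologicalSpace A]
    [ConditionallyCompleteLinearOrder R] {Φ : X → Set A} (hne : ∀ x, (Φ x).Nonempty)
    (hcomp : ∀ x, IsCompact (Φ x)) (husc : UpperHemicontinuous Φ) {h : X × A → R}
    (hlsc : LowerSemicontinuousOn h {p : X × A | p.2 ∈ Φ p.1}) :
    LowerSemicontinuous fun x => sInf ((fun a => h (x, a)) '' Φ x) := by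
  have hslice (x : X) : LowerSemicontinuousOn (fun a => h (x, a)) (Φ x) :=
    hlsc.comp (Continuous.prodMk_right x).continuousOn fun _ ha => ha
  intro x c hc
  have hlt : ∀ a ∈ Φ x, c < h (x, a) := fun a ha =>
    hc.trans_le (csInf_le ((hslice x).bddBelow_of_isCompact (hcomp x)) ⟨a, ha, rfl⟩)
  have hnhds : {p : X × A | p.2 ∈ Φ p.1 → c < h p} ∈ 𝓝ˢ ({x} ×ˢ Φ x) := by
    rw [mem_nhdsSet_iff_forall]
    rintro ⟨_, a⟩ ⟨rfl, ha⟩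
    exact eventually_nhdsWithin_iff.1 (hlsc (_, a) ha c (hlt a ha))
  obtain ⟨O, hO, hsub, hOlt⟩ := mem_nhdsSet_iff_exists.1 hnhds
  obtain ⟨U, V, hU, hV, hxU, hΦV, hUV⟩ :=
    generalized_tube_lemma isCompact_singleton (hcomp x) hO hsub
  filter_upwards [hU.mem_nhds (hxU rfl), husc.forall_isOpen x V hV hΦV] with x' hx' hΦx'
  obtain ⟨a, ha, hmin⟩ := exists_mem_sInf_image_eq (hne x') (hcomp x') (hslice x')
  exact hmin.symm ▸ hOlt (hUV ⟨hx', hΦx' ha⟩) ha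

theorem sInf_image_le_sInf_image_add {A : Type*} {s : Set A} (hne : s.Nonempty) {f g : A → ℝ}
    {c : ℝ} (hf : BddBelow (f '' s)) (hfg : ∀ a ∈ s, f a ≤ g a + c) :
    sInf (f '' s) ≤ sInf (g '' s) + c := by
  rw [← sub_le_iff_le_add]
  refine le_csInf (hne.image g) (Set.forall_mem_image.2 fun a ha => sub_le_iff_le_add.2 ?_)
  exact (csInf_le hf (Set.mem_image_of_mem f ha)).trans (hfg a ha)

theorem abs_sInf_image_sub_sInf_image_le {A : Type*} {s : Set A} (hne : s.Nonempty) {f g : A → ℝ}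
    {c : ℝ} (hf : BddBelow (f '' s)) (hg : BddBelow (g '' s))
    (hfg : ∀ a ∈ s, |f a - g a| ≤ c) : |sInf (f '' s) - sInf (g '' s)| ≤ c := by
  refine abs_sub_le_iff.2 ⟨sub_le_iff_le_add'.2 ?_, sub_le_iff_le_add'.2 ?_⟩
  · exact sInf_image_le_sInf_image_add hne hf fun a ha =>
      sub_le_iff_le_add'.1 (abs_sub_le_iff.1 (hfg a ha)).1
  · exact sInf_image_le_sInf_image_add hne hg fun a ha =>
      sub_le_iff_le_add'.1 (abs_sub_le_iff.1 (hfg a ha)).2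

end ParametricInfimum

theorem existsUnique_isFixedPt_of_lipschitzOnWith {E : Type*} [EMetricSpace E] {B : Set E}
    (hB : IsComplete B) (hne : B.Nonempty) (hfin : ∀ x ∈ B, ∀ y ∈ B, edist x y ≠ ⊤) {f : E → E}
    (hmaps : Set.MapsTo f B B) {γ : ℝ≥0} (hγ : γ < 1) (hf : LipschitzOnWith γ f B) :
    ∃! x, x ∈ B ∧ Function.IsFixedPt f x := by
  obtain ⟨x₀, hx₀⟩ := hne
  have hcontr : ContractingWith γ (hmaps.restrict f B B) := ⟨hγ, hf.mapsToRestrict hmaps⟩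
  obtain ⟨x, hx, hfix, -⟩ :=
    hcontr.exists_fixedPoint' hB hmaps hx₀ (hfin x₀ hx₀ (f x₀) (hmaps hx₀))
  refine ⟨x, ⟨hx, hfix⟩, fun y ⟨hy, hyfix⟩ => ?_⟩
  have hrestrict {z : E} (hz : z ∈ B) (hzfix : f z = z) :
      Function.IsFixedPt (hmaps.restrict f B B) ⟨z, hz⟩ := Subtype.ext hzfix
  exact congrArg Subtype.val <| (hcontr.eq_or_edist_eq_top_of_fixedPoints (hrestrict hy hyfix)
    (hrestrict hx hfix)).resolve_right (hfin y hy x hx)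

section WeightedNorm

variable {X : Type*} {W : X → ℝ}

theorem wNorm_le_ofReal (hW : ∀ x, 0 < W x) {u : X → ℝ} {N : ℝ} (hu : ∀ x, |u x| ≤ N * W x) :
    WNorm W u ≤ ENNReal.ofReal N :=
  iSup_le fun x => ENNReal.ofReal_le_ofReal ((div_le_iff₀ (hW x)).2 (hu x))

theorem abs_le_toReal_wNorm_mul (hW : ∀ x, 0 < W x) {u : X → ℝ} (hu : WNorm W u < ⊤) (x : X) :
    |u x| ≤ (WNorm W u).toReal * W x :=
  (div_le_iff₀ (hW x)).1 <| (ENNReal.ofReal_le_iff_le_toReal hu.ne).1 <|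
    le_iSup (fun x => ENNReal.ofReal (|u x| / W x)) x

/-- Division by a positive weight, as a bijection onto the space of functions with the extended
metric of uniform convergence. It carries the `W`-norm distance to the uniform distance. -/
noncomputable def divWeight (hW : ∀ x, 0 < W x) : (X → ℝ) ≃ (X →ᵤ ℝ) where
  toFun u := UniformFun.ofFun fun x => u x / W x
  invFun f := fun x => UniformFun.toFun f x * W x
  left_inv u := funext fun x => div_mul_cancel₀ (u x) (hW x).ne'
  right_inv f := funext fun x => mul_div_cancel_right₀ (UniformFun.toFun f x) (hW x).ne'

theorem edist_divWeight (hW : ∀ x, 0 < W x) (u v : X → ℝ) :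
    edist (divWeight hW u) (divWeight hW v) = WNorm W (u - v) := by
  refine iSup_congr fun x => ?_
  change edist (u x / W x) (v x / W x) = ENNReal.ofReal (|u x - v x| / W x)
  rw [edist_dist, Real.dist_eq, ← sub_div, abs_div, abs_of_pos (hW x)]

theorem divWeight_mem_eball_zero_top_iff (hW : ∀ x, 0 < W x) {u : X → ℝ} :
    divWeight hW u ∈ Metric.eball (divWeight hW 0) ⊤ ↔ WNorm W u < ⊤ := by
  rw [Metric.mem_eball, edist_divWeight, sub_zero]

theorem wNorm_sub_lt_top (hW : ∀ x, 0 < W x) {u v : X → ℝ} (hu : WNorm W u < ⊤)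
    (hv : WNorm W v < ⊤) : WNorm W (u - v) < ⊤ := by
  rw [← divWeight_mem_eball_zero_top_iff hW, Metric.mem_eball] at hu hv
  rw [← edist_divWeight hW]
  exact (edist_triangle_right _ _ _).trans_lt (ENNReal.add_lt_top.2 ⟨hu, hv⟩)

theorem existsUnique_fixedPoint_of_wNorm_contraction (hW : ∀ x, 0 < W x)
    {S : Set (X → ℝ)} (hS : IsClosed ((divWeight hW).symm ⁻¹' S))
    (hne : ∃ u ∈ S, WNorm W u < ⊤) {T : (X → ℝ) → X → ℝ}
    (hTS : ∀ u ∈ S, WNorm W u < ⊤ → T u ∈ S)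
    (hTfin : ∀ u ∈ S, WNorm W u < ⊤ → WNorm W (T u) < ⊤) {γ : ℝ≥0} (hγ : γ < 1)
    (hT : ∀ u ∈ S, ∀ v ∈ S, WNorm W u < ⊤ → WNorm W v < ⊤ →
      WNorm W (T u - T v) ≤ γ * WNorm W (u - v)) :
    ∃! u, u ∈ S ∧ WNorm W u < ⊤ ∧ u = T u := by
  let e := divWeight hW
  let B : Set (X →ᵤ ℝ) := e.symm ⁻¹' S ∩ Metric.eball (e 0) ⊤
  have hmem {u : X → ℝ} : e u ∈ B ↔ u ∈ S ∧ WNorm W u < ⊤ := by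
    rw [← divWeight_mem_eball_zero_top_iff hW]
    simp only [B, e, Set.mem_inter_iff, Set.mem_preimage, Equiv.symm_apply_apply]
  have hconj (u : X → ℝ) : e.conj T (e u) = e (T u) := by
    rw [Equiv.conj_apply, Equiv.symm_apply_apply]
  have hB : IsComplete B := (hS.inter Metric.isClosed_eball_top).isComplete
  have hBne : B.Nonempty := hne.imp' e fun _ hu => hmem.2 hu
  have hfin : ∀ f ∈ B, ∀ g ∈ B, edist f g ≠ ⊤ := by
    simp_rw [← e.forall_congr_right, hmem]
    intro u hu v hv
    exact (edist_divWeight hW u v).trans_ne (wNorm_sub_lt_top hW hu.2 hv.2).ne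
  have hmaps : Set.MapsTo (e.conj T) B B := by
    simp_rw [Set.MapsTo, ← e.forall_congr_right, hconj, hmem]
    exact fun u hu => ⟨hTS u hu.1 hu.2, hTfin u hu.1 hu.2⟩
  have hlip : LipschitzOnWith γ (e.conj T) B := by
    simp_rw [LipschitzOnWith, ← e.forall_congr_right, hconj, hmem, e, edist_divWeight]
    exact fun u hu v hv => hT u hu.1 v hv.1 hu.2 hv.2
  refine (e.existsUnique_congr fun {u} => ?_).2
    (existsUnique_isFixedPt_of_lipschitzOnWith hB hBne hfin hmaps hγ hlip)
  rw [hmem, Function.IsFixedPt, hconj, e.apply_eq_iff_eq, and_assoc, eq_comm (a := u)]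

theorem isClosed_preimage_divWeight_symm_lowerSemicontinuous [TopologicalSpace X]
    (hW : ∀ x, 0 < W x) (hWcont : Continuous W) :
    IsClosed ((divWeight hW).symm ⁻¹' {u | LowerSemicontinuous u}) := by
  refine isClosed_of_closure_subset fun f hf x c (hc : c < UniformFun.toFun f x * W x) => ?_
  obtain ⟨b, hcb, hbf⟩ := exists_between ((div_lt_iff₀ (hW x)).2 hc)
  set ε : ℝ := (UniformFun.toFun f x - b) / 2 with hε
  have hεpos : 0 < ε := by linarith
  obtain ⟨g, hg : LowerSemicontinuous _, hfg⟩ :=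
    EMetric.mem_closure_iff.1 hf (ENNReal.ofReal ε) (ENNReal.ofReal_pos.2 hεpos)
  have hclose (y : X) : |UniformFun.toFun f y - UniformFun.toFun g y| ≤ ε := by
    rw [← Real.dist_eq, ← edist_le_ofReal hεpos.le]
    exact UniformFun.edist_eval_le.trans hfg.le
  have hlsc : LowerSemicontinuous fun y => UniformFun.toFun g y * W y + -(ε * W y) :=
    hg.add (continuous_const.mul hWcont).neg.lowerSemicontinuous
  have hcx : c < UniformFun.toFun g x * W x + -(ε * W x) :=
    calc c < b * W x := (div_lt_iff₀ (hW x)).1 hcb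
      _ ≤ (UniformFun.toFun g x - ε) * W x := by
        gcongr
        · exact (hW x).le
        · linarith [(abs_le.1 (hclose x)).2]
      _ = UniformFun.toFun g x * W x + -(ε * W x) := by ring
  filter_upwards [hlsc x c hcx] with y hy
  calc c < UniformFun.toFun g y * W y + -(ε * W y) := hy
    _ = (UniformFun.toFun g y - ε) * W y := by ring
    _ ≤ UniformFun.toFun f y * W y := by
      gcongr
      · exact (hW y).le
      · linarith [(abs_le.1 (hclose y)).1]

end WeightedNorm

section Bellman

variable {X A : Type*} [MeasurableSpace X] [MeasurableSpace A] {Adm : X → Set A}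
  {Q : Kernel (X × A) X} {C : X × A → ℝ} {W : X → ℝ} {M α β : ℝ}

/-- The expected cost of a state-action pair `(x, a)` when `u` is the cost-to-go; `Tbell` is its
infimum over the admissible actions. -/
noncomputable def actionValue (Q : Kernel (X × A) X) (C : X × A → ℝ) (α : ℝ) (u : X → ℝ)
    (p : X × A) : ℝ :=
  C p + α * ∫ y, u y ∂Q p

/-- The growth conditions (GC) on the cost and the kernel, for a positive weight. The drift
condition is a lower Lebesgue integral so that it includes the integrability of `W`. -/
structure GrowthConditions (Adm : X → Set A) (Q : Kernel (X × A) X) (C : X × A → ℝ) (W : X → ℝ)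
    (M β : ℝ) : Prop where
  weight_pos : ∀ x, 0 < W x
  measurable_weight : Measurable W
  growth_nonneg : 0 ≤ β
  abs_cost_le : ∀ x, ∀ a ∈ Adm x, |C (x, a)| ≤ M * W x
  lintegral_weight_le : ∀ x, ∀ a ∈ Adm x,
    ∫⁻ y, ENNReal.ofReal (W y) ∂Q (x, a) ≤ ENNReal.ofReal (β * W x)

/-- The compactness-continuity conditions (CC). -/
structure CompactnessContinuity [TopologicalSpace X] [TopologicalSpace A] (Adm : X → Set A)
    (Q : Kernel (X × A) X) (C : X × A → ℝ) (W : X → ℝ) : Prop where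
  isCompact : ∀ x, IsCompact (Adm x)
  upperHemicontinuous : UpperHemicontinuous Adm
  lowerSemicontinuousOn_cost : LowerSemicontinuousOn C {p : X × A | p.2 ∈ Adm p.1}
  continuousOn_integral : ∀ g : X →ᵇ ℝ,
    ContinuousOn (fun p : X × A => ∫ y, g y ∂Q p) {p : X × A | p.2 ∈ Adm p.1}
  continuous_weight : Continuous W
  continuousOn_integral_weight :
    ContinuousOn (fun p : X × A => ∫ y, W y ∂Q p) {p : X × A | p.2 ∈ Adm p.1}

namespace GrowthConditions

theorem integrable_weight (hGC : GrowthConditions Adm Q C W M β) {x : X} {a : A}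
    (ha : a ∈ Adm x) : Integrable W (Q (x, a)) := by
  refine ⟨hGC.measurable_weight.aestronglyMeasurable, ?_⟩
  rw [hasFiniteIntegral_iff_ofReal (Eventually.of_forall fun y => (hGC.weight_pos y).le)]
  exact (hGC.lintegral_weight_le x a ha).trans_lt ENNReal.ofReal_lt_top

theorem integral_weight_le (hGC : GrowthConditions Adm Q C W M β) {x : X} {a : A}
    (ha : a ∈ Adm x) : ∫ y, W y ∂Q (x, a) ≤ β * W x := by
  rw [integral_eq_lintegral_of_nonneg_ae (Eventually.of_forall fun y => (hGC.weight_pos y).le)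
    hGC.measurable_weight.aestronglyMeasurable]
  exact ENNReal.toReal_le_of_le_ofReal (mul_nonneg hGC.growth_nonneg (hGC.weight_pos x).le)
    (hGC.lintegral_weight_le x a ha)

theorem integrable (hGC : GrowthConditions Adm Q C W M β) {u : X → ℝ} (hu : Measurable u)
    (hfin : WNorm W u < ⊤) {x : X} {a : A} (ha : a ∈ Adm x) : Integrable u (Q (x, a)) :=
  ((hGC.integrable_weight ha).const_mul (WNorm W u).toReal).mono' hu.aestronglyMeasurable
    (Eventually.of_forall (abs_le_toReal_wNorm_mul hGC.weight_pos hfin))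

theorem abs_integral_le (hGC : GrowthConditions Adm Q C W M β) {u : X → ℝ} (hfin : WNorm W u < ⊤)
    {x : X} {a : A} (ha : a ∈ Adm x) :
    |∫ y, u y ∂Q (x, a)| ≤ (WNorm W u).toReal * (β * W x) :=
  calc |∫ y, u y ∂Q (x, a)| ≤ ∫ y, (WNorm W u).toReal * W y ∂Q (x, a) :=
        norm_integral_le_of_norm_le (f := u) ((hGC.integrable_weight ha).const_mul _)
          (Eventually.of_forall (abs_le_toReal_wNorm_mul hGC.weight_pos hfin))
    _ = (WNorm W u).toReal * ∫ y, W y ∂Q (x, a) := integral_const_mul _ _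
    _ ≤ (WNorm W u).toReal * (β * W x) := by
        gcongr
        exact hGC.integral_weight_le ha

theorem abs_actionValue_le (hGC : GrowthConditions Adm Q C W M β) (hα : 0 ≤ α) {u : X → ℝ}
    (hfin : WNorm W u < ⊤) {x : X} {a : A} (ha : a ∈ Adm x) :
    |actionValue Q C α u (x, a)| ≤ (M + α * β * (WNorm W u).toReal) * W x :=
  calc |actionValue Q C α u (x, a)| ≤ |C (x, a)| + α * |∫ y, u y ∂Q (x, a)| := by
        rw [← abs_of_nonneg hα, ← abs_mul, abs_of_nonneg hα]
        exact abs_add_le _ _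
    _ ≤ M * W x + α * ((WNorm W u).toReal * (β * W x)) := by
        gcongr
        · exact hGC.abs_cost_le x a ha
        · exact hGC.abs_integral_le hfin ha
    _ = (M + α * β * (WNorm W u).toReal) * W x := by ring

theorem abs_actionValue_sub_le (hGC : GrowthConditions Adm Q C W M β) (hα : 0 ≤ α) {u v : X → ℝ}
    (hu : Measurable u) (hv : Measurable v) (hufin : WNorm W u < ⊤) (hvfin : WNorm W v < ⊤)
    {x : X} {a : A} (ha : a ∈ Adm x) :
    |actionValue Q C α u (x, a) - actionValue Q C α v (x, a)| ≤
      α * β * (WNorm W (u - v)).toReal * W x :=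
  calc |actionValue Q C α u (x, a) - actionValue Q C α v (x, a)|
      = |α * ∫ y, (u - v) y ∂Q (x, a)| := by
        rw [integral_sub' (hGC.integrable hu hufin ha) (hGC.integrable hv hvfin ha)]
        unfold actionValue
        ring_nf
    _ = α * |∫ y, (u - v) y ∂Q (x, a)| := by rw [abs_mul, abs_of_nonneg hα]
    _ ≤ α * ((WNorm W (u - v)).toReal * (β * W x)) := by
        gcongr
        exact hGC.abs_integral_le (wNorm_sub_lt_top hGC.weight_pos hufin hvfin) ha
    _ = α * β * (WNorm W (u - v)).toReal * W x := by ring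

theorem bddBelow_actionValue (hGC : GrowthConditions Adm Q C W M β) (hα : 0 ≤ α) {u : X → ℝ}
    (hfin : WNorm W u < ⊤) (x : X) :
    BddBelow ((fun a => actionValue Q C α u (x, a)) '' Adm x) :=
  ⟨_, Set.forall_mem_image.2 fun _ ha => (abs_le.1 (hGC.abs_actionValue_le hα hfin ha)).1⟩

theorem wNorm_tbell_lt_top (hGC : GrowthConditions Adm Q C W M β) (hne : ∀ x, (Adm x).Nonempty)
    (hα : 0 ≤ α) {u : X → ℝ} (hfin : WNorm W u < ⊤) : WNorm W (Tbell Adm Q C α u) < ⊤ := by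
  refine (wNorm_le_ofReal (N := M + α * β * (WNorm W u).toReal) hGC.weight_pos
    fun x => ?_).trans_lt ENNReal.ofReal_lt_top
  have hbound := fun a ha => abs_le.1 (hGC.abs_actionValue_le hα hfin (x := x) (a := a) ha)
  obtain ⟨a, ha⟩ := hne x
  exact abs_le.2 ⟨le_csInf ((hne x).image _) (Set.forall_mem_image.2 fun a ha => (hbound a ha).1),
    (csInf_le (hGC.bddBelow_actionValue hα hfin x) ⟨a, ha, rfl⟩).trans (hbound a ha).2⟩

theorem wNorm_tbell_sub_tbell_le (hGC : GrowthConditions Adm Q C W M β)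
    (hne : ∀ x, (Adm x).Nonempty) (hα : 0 ≤ α) {u v : X → ℝ} (hu : Measurable u)
    (hv : Measurable v) (hufin : WNorm W u < ⊤) (hvfin : WNorm W v < ⊤) :
    WNorm W (Tbell Adm Q C α u - Tbell Adm Q C α v) ≤
      ENNReal.ofReal (α * β) * WNorm W (u - v) := by
  rw [← ENNReal.ofReal_toReal (wNorm_sub_lt_top hGC.weight_pos hufin hvfin).ne,
    ← ENNReal.ofReal_mul (mul_nonneg hα hGC.growth_nonneg)]
  exact wNorm_le_ofReal hGC.weight_pos fun x =>
    abs_sInf_image_sub_sInf_image_le (hne x) (hGC.bddBelow_actionValue hα hufin x)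
      (hGC.bddBelow_actionValue hα hvfin x) fun a ha =>
        hGC.abs_actionValue_sub_le hα hu hv hufin hvfin ha

end GrowthConditions

theorem lowerSemicontinuousOn_actionValue [PseudoMetricSpace X] [OpensMeasurableSpace X]
    [TopologicalSpace A] (hGC : GrowthConditions Adm Q C W M β)
    (hCC : CompactnessContinuity Adm Q C W) (hα : 0 ≤ α) {u : X → ℝ}
    (hlsc : LowerSemicontinuous u) (hfin : WNorm W u < ⊤) :
    LowerSemicontinuousOn (actionValue Q C α u) {p : X × A | p.2 ∈ Adm p.1} := by
  let minorant (y : X) : ℝ := -(WNorm W u).toReal * W y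
  have hminorant (y : X) : minorant y ≤ u y := by
    linarith [(abs_le.1 (abs_le_toReal_wNorm_mul hGC.weight_pos hfin y)).1]
  have hcont : ContinuousOn (fun p : X × A => ∫ y, minorant y ∂Q p) {p | p.2 ∈ Adm p.1} := by
    simp only [minorant, integral_const_mul]
    exact continuousOn_const.mul hCC.continuousOn_integral_weight
  have hintegral : LowerSemicontinuousOn (fun p : X × A => ∫ y, u y ∂Q p) {p | p.2 ∈ Adm p.1} :=
    lowerSemicontinuousOn_integral_of_le hCC.continuousOn_integral
      (continuous_const.mul hCC.continuous_weight)
      (fun _ hp => (hGC.integrable_weight hp).const_mul _) hcont hlsc hminorant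
      fun _ hp => hGC.integrable hlsc.measurable hfin hp
  exact hCC.lowerSemicontinuousOn_cost.add <|
    (continuous_const_mul α).comp_lowerSemicontinuousOn hintegral (monotone_mul_left_of_nonneg hα)

theorem lowerSemicontinuous_tbell [PseudoMetricSpace X] [OpensMeasurableSpace X]
    [TopologicalSpace A] (hGC : GrowthConditions Adm Q C W M β)
    (hCC : CompactnessContinuity Adm Q C W) (hne : ∀ x, (Adm x).Nonempty) (hα : 0 ≤ α)
    {u : X → ℝ} (hlsc : LowerSemicontinuous u) (hfin : WNorm W u < ⊤) :
    LowerSemicontinuous (Tbell Adm Q C α u) :=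
  lowerSemicontinuous_sInf_image hne hCC.isCompact hCC.upperHemicontinuous
    (lowerSemicontinuousOn_actionValue hGC hCC hα hlsc hfin)

theorem optimality_equation_unique_general [PseudoMetricSpace X] [OpensMeasurableSpace X]
    [TopologicalSpace A] (hne : ∀ x, (Adm x).Nonempty) (hα : 0 ≤ α) (hγ : α * β < 1)
    (hGC : GrowthConditions Adm Q C W M β) (hCC : CompactnessContinuity Adm Q C W) :
    ∃! vstar : X → ℝ, LowerSemicontinuous vstar ∧ WNorm W vstar < ⊤ ∧
      ∀ x, vstar x = Tbell Adm Q C α vstar x := by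
  have hzero : WNorm W 0 < ⊤ :=
    (wNorm_le_ofReal hGC.weight_pos (N := 0) (by simp)).trans_lt ENNReal.ofReal_lt_top
  have hfixed := existsUnique_fixedPoint_of_wNorm_contraction hGC.weight_pos
    (isClosed_preimage_divWeight_symm_lowerSemicontinuous hGC.weight_pos hCC.continuous_weight)
    (T := Tbell Adm Q C α)
    ⟨0, lowerSemicontinuous_const, hzero⟩
    (fun _ hlsc hfin => lowerSemicontinuous_tbell hGC hCC hne hα hlsc hfin)
    (fun _ _ hfin => hGC.wNorm_tbell_lt_top hne hα hfin)
    (Real.toNNReal_lt_one.2 hγ)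
    (fun _ hu _ hv => hGC.wNorm_tbell_sub_tbell_le hne hα hu.measurable hv.measurable)
  simpa only [Set.mem_ofPred_eq, funext_iff] using hfixed

end Bellman

/-- Under the growth conditions (GC) and the compactness-continuity conditions
(CC), the dynamic programming operator `T` has a unique fixed point `v*` in the
class of lower semicontinuous functions of finite `W`-norm (the optimality
equation). -/
theorem optimality_equation_unique {X A : Type*}
    [MetricSpace X] [PolishSpace X] [MeasurableSpace X] [BorelSpace X]
    [MetricSpace A] [PolishSpace A] [MeasurableSpace A] [BorelSpace A]
    (Adm : X → Set A) (hAne : ∀ x, (Adm x).Nonempty)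
    (hKmeas : MeasurableSet {p : X × A | p.2 ∈ Adm p.1})
    (Q : Kernel (X × A) X) [IsMarkovKernel Q]
    (C : X × A → ℝ) (hCmeas : Measurable C)
    (α : ℝ) (hα0 : 0 < α) (hα1 : α < 1)
    (M β : ℝ) (hM : 0 < M) (hβ : 1 < β)
    (W : X → ℝ) (hWmeas : Measurable W) (hW1 : ∀ x, 1 ≤ W x)
    (hCW : ∀ x, ∀ a ∈ Adm x, |C (x, a)| ≤ M * W x)
    (hQW : ∀ x, ∀ a ∈ Adm x,
      ∫⁻ y, ENNReal.ofReal (W y) ∂(Q (x, a)) ≤ ENNReal.ofReal (β * W x))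
    (hγ : α * β < 1)
    (hAcomp : ∀ x, IsCompact (Adm x))
    (hAusc : ∀ x, ∀ U : Set A, IsOpen U → Adm x ⊆ U → ∀ᶠ x' in 𝓝 x, Adm x' ⊆ U)
    (hClsc : LowerSemicontinuousOn C {p : X × A | p.2 ∈ Adm p.1})
    (hQweak : ∀ g : X → ℝ, Continuous g → (∃ b, ∀ y, |g y| ≤ b) →
      ContinuousOn (fun p : X × A => ∫ y, g y ∂(Q p)) {p : X × A | p.2 ∈ Adm p.1})
    (hWcont : Continuous W)
    (hQWcont : ContinuousOn (fun p : X × A => ∫ y, W y ∂(Q p))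
      {p : X × A | p.2 ∈ Adm p.1})
    : ∃! vstar : X → ℝ, LowerSemicontinuous vstar ∧ WNorm W vstar < ⊤ ∧
        ∀ x, vstar x = Tbell Adm Q C α vstar x := by
  have hGC : GrowthConditions Adm Q C W M β :=
    ⟨fun x => zero_lt_one.trans_le (hW1 x), hWmeas, zero_le_one.trans hβ.le, hCW, hQW⟩
  have hCC : CompactnessContinuity Adm Q C W :=
    ⟨hAcomp, .of_forall_isOpen hAusc, hClsc,
      fun g => hQweak g g.continuous ⟨‖g‖, g.norm_coe_le_norm⟩, hWcont, hQWcont⟩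
  exact optimality_equation_unique_general hAne hα0.le hγ hGC hCC
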